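/- arXiv:math/0608757 — 2 statements merged into one kernel-verified Lean document; each statement's English description precedes it below -/
import Mathlib

section
/- Let ν > 0 and define C : ℝ⁴ → ℝ by C(x,t,u,p) = −0.01·t·(t·u − x)²·p². Let u : ℝ × ℝ → ℝ be a smooth (C^∞) solution of the modified Burgers equation ∂u/∂t + u·∂u/∂x − ν·∂²u/∂x² + ∂/∂x[ C(x,t,u(x,t),∂u/∂x(x,t))·∂u/∂x(x,t) ] = 0 on all of ℝ². Then for every λ > 0, the function v(x,t) = λ·u(x, λt) is a smooth solution of the modified equation with viscosity λν: ∂v/∂t + v·∂v/∂x − (λν)·∂²v/∂x² + ∂/∂x[ C(x,t,v,∂v/∂x)·∂v/∂x ] = 0 everywhere (the differential approximation of the invariant scheme is preserved by the dilatation (x,t,u,ν) ↦ (x, λ⁻¹t, λu, λν)). -/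
/-- Partial derivative with respect to the first (space) variable. -/
noncomputable def pdx (u : ℝ × ℝ → ℝ) : ℝ × ℝ → ℝ :=
  fun p => deriv (fun y => u (y, p.2)) p.1

/-- Partial derivative with respect to the second (time) variable. -/
noncomputable def pdt (u : ℝ × ℝ → ℝ) : ℝ × ℝ → ℝ :=
  fun p => deriv (fun s => u (p.1, s)) p.2

/-- The artificial viscosity coefficient \`C(x,t,u,p) = −0.01 t (tu − x)² p²\`. -/
noncomputable def Cvisc (x t u p : ℝ) : ℝ := -0.01 * t * (t * u - x) ^ 2 * p ^ 2

/-- \`u\` is a smooth solution of the modified Burgers equation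
\`u_t + u u_x − ν u_xx + (C(x,t,u,u_x) u_x)_x = 0\`, the differential
approximation of the invariant scheme. -/
def IsModifiedBurgersSolution (ν : ℝ) (u : ℝ × ℝ → ℝ) : Prop :=
  ContDiff ℝ (⊤ : ℕ∞) u ∧
    ∀ p : ℝ × ℝ,
      pdt u p + u p * pdx u p - ν * pdx (pdx u) p
        + pdx (fun q => Cvisc q.1 q.2 (u q) (pdx u q) * pdx u q) p = 0

/-!
For `v(x, t) = l u(x, l t)`, each of the terms `v_t`, `v v_x`, `(l ν) v_xx` and `(C v_x)_x` is
`l ^ 2` times the corresponding term for `u` and `ν` at `(x, l t)`. For the last one this amounts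
to the homogeneity `C(x, t, l u, l p) = l C(x, l t, u, p)` of the viscosity coefficient.
-/

/-- The dilatation `w ↦ ((x, t) ↦ a w(x, l t))` of functions of space and time. The amplitude `a`
is independent of `l`: a solution scales by `l`, its time derivative and its flux by `l ^ 2`. -/
def dilatation (a l : ℝ) (w : ℝ × ℝ → ℝ) : ℝ × ℝ → ℝ :=
  fun p => a * w (p.1, l * p.2)

/-- The flux `C(x, t, u, u_x) u_x` of an artificial viscosity with arbitrary coefficient `C`. -/
noncomputable def viscousFlux (C : ℝ → ℝ → ℝ → ℝ → ℝ) (u : ℝ × ℝ → ℝ) : ℝ × ℝ → ℝ :=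
  fun q => C q.1 q.2 (u q) (pdx u q) * pdx u q

/-- The left-hand side `u_t + u u_x - ν u_xx + (C u_x)_x` of the modified Burgers equation, for an
arbitrary artificial viscosity coefficient `C`. -/
noncomputable def burgersResidual (C : ℝ → ℝ → ℝ → ℝ → ℝ) (ν : ℝ) (u : ℝ × ℝ → ℝ) :
    ℝ × ℝ → ℝ :=
  fun p => pdt u p + u p * pdx u p - ν * pdx (pdx u) p + pdx (viscousFlux C u) p

theorem pdx_dilatation (a l : ℝ) (w : ℝ × ℝ → ℝ) :
    pdx (dilatation a l w) = dilatation a l (pdx w) :=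
  funext fun _ => deriv_const_mul_field a

theorem pdt_dilatation (a l : ℝ) (w : ℝ × ℝ → ℝ) :
    pdt (dilatation a l w) = dilatation (a * l) l (pdt w) := by
  funext ⟨x, t⟩
  calc deriv (fun s => a * w (x, l * s)) t
      = a * deriv (fun s => w (x, l * s)) t := deriv_const_mul_field a
    _ = a * (l * deriv (fun s => w (x, s)) (l * t)) :=
        congrArg (a * ·) (deriv_comp_mul_left l (fun s => w (x, s)) t)
    _ = a * l * deriv (fun s => w (x, s)) (l * t) := (mul_assoc ..).symm

theorem contDiff_dilatation {n : WithTop ℕ∞} {w : ℝ × ℝ → ℝ} (hw : ContDiff ℝ n w) (a l : ℝ) :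
    ContDiff ℝ n (dilatation a l w) :=
  contDiff_const.mul (hw.comp (contDiff_fst.prodMk (contDiff_const.mul contDiff_snd)))

section Homogeneous

variable {C : ℝ → ℝ → ℝ → ℝ → ℝ} {l : ℝ}

theorem viscousFlux_dilatation (hC : ∀ x t u p, C x t (l * u) (l * p) = l * C x (l * t) u p)
    (u : ℝ × ℝ → ℝ) :
    viscousFlux C (dilatation l l u) = dilatation (l ^ 2) l (viscousFlux C u) := by
  funext p
  simp only [viscousFlux, pdx_dilatation]
  simp only [dilatation, viscousFlux, hC]
  ring

theorem burgersResidual_dilatation (hC : ∀ x t u p, C x t (l * u) (l * p) = l * C x (l * t) u p)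
    (ν : ℝ) (u : ℝ × ℝ → ℝ) :
    burgersResidual C (l * ν) (dilatation l l u) =
      dilatation (l ^ 2) l (burgersResidual C ν u) := by
  funext p
  simp only [burgersResidual, viscousFlux_dilatation hC, pdx_dilatation, pdt_dilatation]
  simp only [dilatation, burgersResidual]
  ring

end Homogeneous

theorem Cvisc_mul_mul (l x t u p : ℝ) : Cvisc x t (l * u) (l * p) = l * Cvisc x (l * t) u p := by
  simp only [Cvisc]
  ring

theorem isModifiedBurgersSolution_iff {ν : ℝ} {u : ℝ × ℝ → ℝ} :
    IsModifiedBurgersSolution ν u ↔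
      ContDiff ℝ (⊤ : ℕ∞) u ∧ ∀ p, burgersResidual Cvisc ν u p = 0 :=
  Iff.rfl

theorem modified_burgers_invariant_dilatation_viscosity_general (ν : ℝ) (u : ℝ × ℝ → ℝ)
    (hu : IsModifiedBurgersSolution ν u) (l : ℝ) :
    IsModifiedBurgersSolution (l * ν) (fun p => l * u (p.1, l * p.2)) := by
  obtain ⟨hsmooth, hres⟩ := isModifiedBurgersSolution_iff.mp hu
  refine isModifiedBurgersSolution_iff.mpr ⟨contDiff_dilatation hsmooth l l, fun p => ?_⟩
  calc burgersResidual Cvisc (l * ν) (dilatation l l u) p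
      = l ^ 2 * burgersResidual Cvisc ν u (p.1, l * p.2) :=
        congrFun (burgersResidual_dilatation (Cvisc_mul_mul l) ν u) p
    _ = 0 := by rw [hres, mul_zero]

/-- The differential approximation of the invariant scheme is preserved by the
dilatation `(x,t,u,ν) ↦ (x, λ⁻¹t, λu, λν)` acting also on the viscosity. -/
theorem modified_burgers_invariant_dilatation_viscosity (ν : ℝ) (hν : 0 < ν)
    (u : ℝ × ℝ → ℝ) (hu : IsModifiedBurgersSolution ν u) (l : ℝ) (hl : 0 < l) :
    IsModifiedBurgersSolution (l * ν) (fun p => l * u (p.1, l * p.2)) :=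
  modified_burgers_invariant_dilatation_viscosity_general ν u hu l
end

section
/- Fix ν > 0, h > 0, τ > 0. For a smooth function u : ℝ × ℝ → ℝ define g₁ = −∂_x(u²/2) + ν·∂²_x u, g₂ = ∂_x(−g₁·u) + ν·∂²_x g₁, g₃ = ∂_x(−g₂·u − g₁²) + ν·∂²_x g₂, and the Lax–Wendroff first differential approximation operator E[u; h, τ, ν] = ∂_t u + ∂_x(u²/2) − ν·∂²_x u + (τ²/6)·g₃ + (h²/12)·∂³_x(u²) − (νh²/12)·∂⁴_x u. Suppose u is a smooth (C^∞) solution of E[u; h, τ, ν] = 0 on ℝ². Then for every λ > 0, the function v(x,t) = λ·u(λx, λ²t) satisfies E[v; h/λ, τ/λ², ν] = 0 on ℝ² (the Lax–Wendroff first differential approximation is invariant under the dilatation (x,t,u,h,τ) ↦ (λ⁻¹x, λ⁻²t, λu, λ⁻¹h, λ⁻²τ)). -/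
/-- \`g₁ = −(u²/2)_x + ν u_xx\`. -/
noncomputable def g1 (ν : ℝ) (u : ℝ × ℝ → ℝ) : ℝ × ℝ → ℝ :=
  fun p => -pdx (fun q => (u q) ^ 2 / 2) p + ν * pdx (pdx u) p

/-- \`g₂ = (−g₁ u)_x + ν (g₁)_xx\`. -/
noncomputable def g2 (ν : ℝ) (u : ℝ × ℝ → ℝ) : ℝ × ℝ → ℝ :=
  fun p => pdx (fun q => -g1 ν u q * u q) p + ν * pdx (pdx (g1 ν u)) p

/-- \`g₃ = (−g₂ u − g₁²)_x + ν (g₂)_xx\`. -/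
noncomputable def g3 (ν : ℝ) (u : ℝ × ℝ → ℝ) : ℝ × ℝ → ℝ :=
  fun p => pdx (fun q => -g2 ν u q * u q - (g1 ν u q) ^ 2) p
    + ν * pdx (pdx (g2 ν u)) p

/-- The first differential approximation operator of the FTCS scheme:
\`E[u; h, τ, ν] = u_t + (u²/2)_x − ν u_xx + (τ/2) g₂ + (h²/12)(u²)_xxx −
(νh²/12) u_xxxx\`. -/
noncomputable def ftcsFDA (h τ ν : ℝ) (u : ℝ × ℝ → ℝ) : ℝ × ℝ → ℝ :=
  fun p =>
    pdt u p + pdx (fun q => (u q) ^ 2 / 2) p - ν * pdx (pdx u) p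
      + τ / 2 * g2 ν u p
      + h ^ 2 / 12 * pdx (pdx (pdx (fun q => (u q) ^ 2))) p
      - ν * h ^ 2 / 12 * pdx (pdx (pdx (pdx u))) p

/-- The first differential approximation operator of the Lax–Wendroff scheme:
\`E[u; h, τ, ν] = u_t + (u²/2)_x − ν u_xx + (τ²/6) g₃ + (h²/12)(u²)_xxx −
(νh²/12) u_xxxx\`. -/
noncomputable def laxWendroffFDA (h τ ν : ℝ) (u : ℝ × ℝ → ℝ) : ℝ × ℝ → ℝ :=
  fun p =>
    pdt u p + pdx (fun q => (u q) ^ 2 / 2) p - ν * pdx (pdx u) p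
      + τ ^ 2 / 6 * g3 ν u p
      + h ^ 2 / 12 * pdx (pdx (pdx (fun q => (u q) ^ 2))) p
      - ν * h ^ 2 / 12 * pdx (pdx (pdx (pdx u))) p

/-!
Give `x`, `t`, `u` the weights `-1`, `-2`, `1`. Then `∂ₓ` raises weights by `1` and `∂ₜ` by `2`, so
`g₁`, `g₂`, `g₃` have weights `3`, `5`, `7`. With `h` and `τ` of weights `-1` and `-2`, every term
of the approximation has weight `3`: the dilatation multiplies the whole operator by `λ³`.
-/

/-- The parabolic dilatation of a function of weight `k`, i.e. `w ↦ λᵏ w(λx, λ²t)`. The weight is a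
parameter so that the dilated `u` (weight `1`) and all the quantities built from it are instances of
the same notion. -/
noncomputable def dilate (l : ℝ) (k : ℕ) (w : ℝ × ℝ → ℝ) : ℝ × ℝ → ℝ :=
  fun q => l ^ k * w (l * q.1, l ^ 2 * q.2)

section Dilate

variable (l : ℝ) (k : ℕ) (w : ℝ × ℝ → ℝ)

theorem dilate_one : dilate l 1 w = fun q => l * w (l * q.1, l ^ 2 * q.2) := by
  funext q
  simp only [dilate, pow_one]

theorem pdx_dilate : pdx (dilate l k w) = dilate l (k + 1) (pdx w) := by
  funext q
  have chain := deriv_comp_mul_left l (fun y => w (y, l ^ 2 * q.2)) q.1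
  simp only [pdx, dilate, deriv_const_mul_field', chain, smul_eq_mul]
  ring

theorem pdt_dilate : pdt (dilate l k w) = dilate l (k + 2) (pdt w) := by
  funext q
  have chain := deriv_comp_mul_left (l ^ 2) (fun s => w (l * q.1, s)) q.2
  simp only [pdt, dilate, deriv_const_mul_field', chain, smul_eq_mul]
  ring

theorem dilate_sq : (fun q => dilate l k w q ^ 2) = dilate l (2 * k) (fun q => w q ^ 2) := by
  funext q
  simp only [dilate]
  ring

theorem dilate_sq_div_two :
    (fun q => dilate l k w q ^ 2 / 2) = dilate l (2 * k) (fun q => w q ^ 2 / 2) := by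
  funext q
  simp only [dilate]
  ring

theorem neg_dilate_mul_dilate (j : ℕ) (f : ℝ × ℝ → ℝ) :
    (fun q => -dilate l j f q * dilate l k w q) = dilate l (j + k) (fun q => -f q * w q) := by
  funext q
  simp only [dilate]
  ring

end Dilate

section Burgers

variable (ν l : ℝ) (u : ℝ × ℝ → ℝ)

theorem g1_dilate : g1 ν (dilate l 1 u) = dilate l 3 (g1 ν u) := by
  funext p
  simp only [g1, dilate_sq_div_two, pdx_dilate]
  simp only [dilate, g1]
  ring

theorem g2_dilate : g2 ν (dilate l 1 u) = dilate l 5 (g2 ν u) := by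
  funext p
  simp only [g2, g1_dilate, neg_dilate_mul_dilate, pdx_dilate]
  simp only [dilate, g2]
  ring

theorem g3_dilate : g3 ν (dilate l 1 u) = dilate l 7 (g3 ν u) := by
  have flux :
      (fun q => -dilate l 5 (g2 ν u) q * dilate l 1 u q - dilate l 3 (g1 ν u) q ^ 2) =
        dilate l 6 (fun q => -g2 ν u q * u q - g1 ν u q ^ 2) := by
    funext q
    simp only [dilate]
    ring
  funext p
  simp only [g3, g1_dilate, g2_dilate, flux, pdx_dilate]
  simp only [dilate, g3]
  ring

end Burgers

theorem laxWendroffFDA_invariant_dilatation_general (ν h τ : ℝ) (u : ℝ × ℝ → ℝ) {l : ℝ}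
    (hl : l ≠ 0) :
    laxWendroffFDA (h / l) (τ / l ^ 2) ν (dilate l 1 u) =
      dilate l 3 (laxWendroffFDA h τ ν u) := by
  funext p
  simp only [laxWendroffFDA, dilate_sq_div_two, dilate_sq, g3_dilate, pdx_dilate, pdt_dilate]
  simp only [dilate, laxWendroffFDA]
  field_simp
  ring

/-- The Lax–Wendroff first differential approximation is invariant under the
dilatation `(x,t,u,h,τ) ↦ (λ⁻¹x, λ⁻²t, λu, λ⁻¹h, λ⁻²τ)`. -/
theorem laxWendroffFDA_invariant_dilatation (ν h τ : ℝ) (hν : 0 < ν)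
    (hh : 0 < h) (hτ : 0 < τ) (u : ℝ × ℝ → ℝ) (hu : ContDiff ℝ (⊤ : ℕ∞) u)
    (hE : ∀ p : ℝ × ℝ, laxWendroffFDA h τ ν u p = 0) (l : ℝ) (hl : 0 < l) :
    ∀ p : ℝ × ℝ,
      laxWendroffFDA (h / l) (τ / l ^ 2) ν
        (fun q => l * u (l * q.1, l ^ 2 * q.2)) p = 0 := by
  intro p
  rw [← dilate_one, laxWendroffFDA_invariant_dilatation_general ν h τ u hl.ne', dilate, hE,
    mul_zero]
end
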